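/- arXiv:2404.10485 — 7 statements merged into one kernel-verified Lean document; each statement's English description precedes it below -/
import Mathlib

section
/- Let θ be an irrational real number, let β be a real number with 0 < β < 1, and let x ∈ ℝ. Then the coding sequence c(θ, β, x) : ℤ → Bool is repetitive: for every k ∈ ℕ there exists ℓ ∈ ℕ such that for all m, n ∈ ℤ there exists j ∈ ℤ with m ≤ j ≤ m + ℓ and c(θ, β, x)(j + t) = c(θ, β, x)(n + t) for every natural number t < k. -/
/-!
The coding is right-continuous: moving a point of the circle slightly to the right does not change
whether it lies in `[0, β)`, hence a small enough move does not change its first `k` symbols.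
So every word of length `k` seen at time `n` is seen again at time `n + d` whenever `d * θ` lies
modulo `1` in a suitable interval `(0, ε)` (`eventually_fract_lt_iff`). Since `ℤ + ℤθ` is dense and
the circle is compact, such `d` occur with bounded gaps (`exists_bounded_return`). The bound
depends on `n` through `ε`, but there are only finitely many words of length `k`: one
occurrence of each word is chosen, and the maximum of their bounds works for all `n`.
-/

/-- The coding sequence of `x` under the rotation by `θ` with respect to the
partition `[0, β)`, `[β, 1)` of the circle. -/
noncomputable def coding (θ β x : ℝ) (n : ℤ) : Bool :=
  decide (Int.fract (x + (n : ℝ) * θ) < β)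

/-- Return times of an irrational rotation to `(0, ε)` modulo `1` have bounded gaps. -/
lemma exists_bounded_return {θ : ℝ} (hθ : Irrational θ) {ε : ℝ} (hε : 0 < ε) :
    ∃ ℓ : ℕ, ∀ m : ℤ, ∃ d a : ℤ, m ≤ d ∧ d ≤ m + (ℓ : ℤ) ∧
      0 < (d : ℝ) * θ + a ∧ (d : ℝ) * θ + a < ε := by
  have hdense : Dense (AddSubgroup.closure {1, θ} : Set ℝ) := by
    rw [dense_addSubgroupClosure_pair_iff]
    simpa using hθ.inv
  -- `U N` consists of the points that enter `(0, ε)` modulo `1` at some time in `[-N, N]`.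
  let U : ℕ → Set ℝ := fun N => ⋃ (d : ℤ) (_ : |d| ≤ N) (a : ℤ),
    (fun y : ℝ => y + (d : ℝ) * θ + a) ⁻¹' Set.Ioo 0 ε
  have hmem : ∀ N y, y ∈ U N ↔ ∃ d : ℤ, |d| ≤ N ∧ ∃ a : ℤ,
      0 < y + (d : ℝ) * θ + a ∧ y + (d : ℝ) * θ + a < ε := by
    intro N y
    simp [U]
  have hopen : ∀ N, IsOpen (U N) := fun N =>
    isOpen_iUnion fun d => isOpen_iUnion fun _ => isOpen_iUnion fun a =>
      isOpen_Ioo.preimage (by fun_prop)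
  have hmono : Monotone U := by
    intro N M hNM y hy
    rw [hmem] at hy ⊢
    obtain ⟨d, hd, h⟩ := hy
    exact ⟨d, hd.trans (by exact_mod_cast hNM), h⟩
  have hcover : Set.Icc (0 : ℝ) 1 ⊆ ⋃ N, U N := by
    intro y _
    obtain ⟨z, hz, hzy⟩ := hdense.exists_between (show -y < -y + ε by linarith)
    obtain ⟨a, d, rfl⟩ := AddSubgroup.mem_closure_pair.1 hz
    simp only [zsmul_eq_mul, mul_one, Set.mem_Ioo] at hzy
    refine Set.mem_iUnion.2 ⟨d.natAbs, (hmem _ _).2 ⟨d, by simp, a, ?_, ?_⟩⟩ <;>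
      linarith [hzy.1, hzy.2]
  obtain ⟨N, hN⟩ := isCompact_Icc.elim_directed_cover U hopen hcover hmono.directed_le
  refine ⟨2 * N, fun m => ?_⟩
  -- Time `0` of the cover is placed at the centre `m + N` of the window.
  obtain ⟨d, hd, a, h1, h2⟩ := (hmem _ _).1 <| hN
    (show Int.fract (((m + N : ℤ) : ℝ) * θ) ∈ Set.Icc (0 : ℝ) 1 from
      ⟨Int.fract_nonneg _, (Int.fract_lt_one _).le⟩)
  rw [abs_le] at hd
  refine ⟨m + N + d, a - ⌊((m + N : ℤ) : ℝ) * θ⌋, by lia, by push_cast; lia, ?_⟩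
  have key : ((m + N + d : ℤ) : ℝ) * θ + ((a - ⌊((m + N : ℤ) : ℝ) * θ⌋ : ℤ) : ℝ)
      = Int.fract (((m + N : ℤ) : ℝ) * θ) + (d : ℝ) * θ + a := by
    rw [Int.fract]
    push_cast
    ring
  rw [key]
  exact ⟨h1, h2⟩

/-- Right-continuity of the coding map; this is where the half-open shape of `[0, β)` is used. -/
lemma eventually_fract_lt_iff (β y : ℝ) :
    ∃ ε > 0, ∀ δ, 0 < δ → δ < ε → (Int.fract (y + δ) < β ↔ Int.fract y < β) := by
  have h0 := Int.fract_nonneg y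
  have h1 := Int.fract_lt_one y
  -- Before the fractional part wraps around at `1`, translation by `δ` just adds `δ` to it.
  have hadd : ∀ δ, 0 < δ → δ < 1 - Int.fract y → Int.fract (y + δ) = Int.fract y + δ := by
    intro δ hδ hδ'
    rw [Int.fract_eq_iff]
    refine ⟨by linarith, by linarith, ⌊y⌋, ?_⟩
    rw [Int.fract]
    ring
  by_cases h : Int.fract y < β
  · refine ⟨min (1 - Int.fract y) (β - Int.fract y), lt_min (by linarith) (by linarith), ?_⟩
    intro δ hδ hδ'
    rw [lt_min_iff] at hδ'
    rw [hadd δ hδ hδ'.1]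
    exact iff_of_true (by linarith) h
  · refine ⟨1 - Int.fract y, by linarith, fun δ hδ hδ' => ?_⟩
    rw [hadd δ hδ hδ']
    exact iff_of_false (by linarith) h

/-- Each single word of length `k` recurs with bounded gaps, the bound depending on its
position `n`. -/
lemma exists_bounded_recurrence {θ : ℝ} (β x : ℝ) (hθ : Irrational θ) (k : ℕ) (n : ℤ) :
    ∃ ℓ : ℕ, ∀ m : ℤ, ∃ j : ℤ, m ≤ j ∧ j ≤ m + (ℓ : ℤ) ∧
      ∀ t : ℕ, t < k → coding θ β x (j + (t : ℤ)) = coding θ β x (n + (t : ℤ)) := by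
  have hev : ∃ ε > 0, ∀ δ, 0 < δ → δ < ε → ∀ t < k,
      (Int.fract (x + ((n + (t : ℤ) : ℤ) : ℝ) * θ + δ) < β ↔
        Int.fract (x + ((n + (t : ℤ) : ℤ) : ℝ) * θ) < β) := by
    induction k with
    | zero => exact ⟨1, one_pos, fun _ _ _ t ht => absurd ht (Nat.not_lt_zero t)⟩
    | succ k ih =>
      obtain ⟨ε₁, hε₁, h₁⟩ := ih
      obtain ⟨ε₂, hε₂, h₂⟩ := eventually_fract_lt_iff β (x + ((n + (k : ℤ) : ℤ) : ℝ) * θ)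
      refine ⟨min ε₁ ε₂, lt_min hε₁ hε₂, fun δ hδ hδ' t ht => ?_⟩
      rw [lt_min_iff] at hδ'
      rcases Nat.lt_succ_iff_lt_or_eq.1 ht with ht | rfl
      · exact h₁ δ hδ hδ'.1 t ht
      · exact h₂ δ hδ hδ'.2
  obtain ⟨ε, hε, h⟩ := hev
  obtain ⟨ℓ, hℓ⟩ := exists_bounded_return hθ hε
  refine ⟨ℓ, fun m => ?_⟩
  obtain ⟨d, a, hd1, hd2, hp, hlt⟩ := hℓ (m - n)
  refine ⟨n + d, by lia, by lia, fun t ht => ?_⟩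
  have key : Int.fract (x + ((n + d + (t : ℤ) : ℤ) : ℝ) * θ)
      = Int.fract (x + ((n + (t : ℤ) : ℤ) : ℝ) * θ + ((d : ℝ) * θ + a)) := by
    rw [← Int.fract_add_intCast _ a]
    congr 1
    push_cast
    ring
  simp only [coding]
  rw [decide_eq_decide, key]
  exact h _ hp hlt t ht

theorem coding_repetitive (θ β x : ℝ) (hθ : Irrational θ) (hβ0 : 0 < β) (hβ1 : β < 1) :
    ∀ k : ℕ, ∃ ℓ : ℕ, ∀ m n : ℤ, ∃ j : ℤ, m ≤ j ∧ j ≤ m + (ℓ : ℤ) ∧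
      ∀ t : ℕ, t < k → coding θ β x (j + (t : ℤ)) = coding θ β x (n + (t : ℤ)) := by
  intro k
  choose L hL using exists_bounded_recurrence β x hθ k
  let W : ℤ → (Fin k → Bool) := fun n t => coding θ β x (n + ((t : ℕ) : ℤ))
  -- `Function.invFun W w` is a chosen occurrence of the word `w`, if there is one.
  refine ⟨Finset.univ.sup fun w => L (Function.invFun W w), fun m n => ?_⟩
  obtain ⟨j, h1, h2, h3⟩ := hL (Function.invFun W (W n)) m
  have hle : L (Function.invFun W (W n)) ≤ Finset.univ.sup fun w => L (Function.invFun W w) :=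
    Finset.le_sup (f := fun w => L (Function.invFun W w)) (Finset.mem_univ (W n))
  have hW : W (Function.invFun W (W n)) = W n := Function.invFun_eq ⟨n, rfl⟩
  exact ⟨j, h1, by lia, fun t ht => (h3 t ht).trans (congrFun hW ⟨t, ht⟩)⟩
end

section
/- Let θ be an irrational real number, let x ∈ ℝ, let m ∈ ℕ, let 0 = x₀ < x₁ < ⋯ < x_{m+1} = 1 be real numbers, let S be a type and ξ : Fin (m+1) → S. Define w : ℤ → S by w(n) = ξ(k) for the unique k with x_k ≤ Int.fract (x + n·θ) < x_{k+1}. Then w is repetitive: for every k ∈ ℕ there exists ℓ ∈ ℕ such that for all p, n ∈ ℤ there exists j with p ≤ j ≤ p + ℓ and w(j + t) = w(n + t) for every natural number t < k. -/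
/-!
The coding sequence `a : ℤ → Fin (m + 1)` recording which interval contains `x + nθ` modulo 1 is
shown to be repetitive; `w = ξ ∘ a` inherits this.

Fix `n` and `k`. Because the intervals are closed on the left and open on the right, moving the
starting point `x + nθ` by a small `d ∈ (0, ε)` moves none of the `k` points
`x + (n + t)θ`, `t < k`, out of its interval (modulo 1). So the word at `n` recurs at every `j` for
which `(j - n)θ` lies in `(0, ε) + ℤ`. By density of `ℤθ + ℤ` and compactness of `[0, 1]`, such `j`
occur with bounded gaps (`exists_return_bound`). The bound depends on `n` only through the word read
there, and there are finitely many words of length `k`, so it can be taken uniform in `n`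
(`repetitiveZ_of_finite`).
-/

/-- A bi-infinite sequence `w : ℤ → S` is repetitive if every word of length `k`
occurring in `w` occurs in every window of length `ℓ + k`. -/
def RepetitiveZ {S : Type*} (w : ℤ → S) : Prop :=
  ∀ k : ℕ, ∃ ℓ : ℕ, ∀ m n : ℤ, ∃ j : ℤ, m ≤ j ∧ j ≤ m + (ℓ : ℤ) ∧
    ∀ t : ℕ, t < k → w (j + (t : ℤ)) = w (n + (t : ℤ))

/-- Over a finite alphabet, it suffices to bound the gaps between recurrences of the word at each
position separately: positions with the same word may share a bound. -/
lemma repetitiveZ_of_finite {A : Type*} [Finite A] (a : ℤ → A)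
    (h : ∀ (k : ℕ) (n : ℤ), ∃ ℓ : ℕ, ∀ p : ℤ, ∃ j : ℤ, p ≤ j ∧ j ≤ p + (ℓ : ℤ) ∧
      ∀ t : ℕ, t < k → a (j + (t : ℤ)) = a (n + (t : ℤ))) :
    RepetitiveZ a := by
  intro k
  have key : ∀ c : Fin k → A, ∃ ℓ : ℕ, ∀ n : ℤ, (∀ t : Fin k, a (n + ((t : ℕ) : ℤ)) = c t) →
      ∀ p : ℤ, ∃ j : ℤ, p ≤ j ∧ j ≤ p + (ℓ : ℤ) ∧
        ∀ t : ℕ, t < k → a (j + (t : ℤ)) = a (n + (t : ℤ)) := by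
    intro c
    by_cases hc : ∃ n₀ : ℤ, ∀ t : Fin k, a (n₀ + ((t : ℕ) : ℤ)) = c t
    · obtain ⟨n₀, hn₀⟩ := hc
      obtain ⟨ℓ, hℓ⟩ := h k n₀
      refine ⟨ℓ, fun n hn p => ?_⟩
      obtain ⟨j, h1, h2, h3⟩ := hℓ p
      exact ⟨j, h1, h2, fun t ht =>
        (h3 t ht).trans ((hn₀ ⟨t, ht⟩).trans (hn ⟨t, ht⟩).symm)⟩
    · exact ⟨0, fun n hn => absurd ⟨n, hn⟩ hc⟩
  choose L hL using key
  obtain ⟨M, hM⟩ := (Set.finite_range L).bddAbove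
  refine ⟨M, fun p n => ?_⟩
  obtain ⟨j, h1, h2, h3⟩ := hL (fun t => a (n + ((t : ℕ) : ℤ))) n (fun _ => rfl) p
  have hle : L (fun t => a (n + ((t : ℕ) : ℤ))) ≤ M := hM ⟨_, rfl⟩
  exact ⟨j, h1, by omega, h3⟩

/-- Every orbit of an irrational rotation enters the arc `(0, ε)` with uniformly bounded gaps. -/
lemma exists_return_bound (θ : ℝ) (hθ : Irrational θ) (ε : ℝ) (hε : 0 < ε) (n : ℤ) :
    ∃ ℓ : ℕ, ∀ p : ℤ, ∃ j : ℤ, p ≤ j ∧ j ≤ p + (ℓ : ℤ) ∧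
      ∃ q : ℤ, 0 < ((j : ℝ) - n) * θ - q ∧ ((j : ℝ) - n) * θ - q < ε := by
  have hd : Dense (AddSubgroup.closure {θ, 1} : Set ℝ) :=
    dense_addSubgroupClosure_pair_iff.2 (by simpa using hθ)
  let U : ℤ × ℤ → Set ℝ := fun r => {z | 0 < z + r.1 * θ + r.2 ∧ z + r.1 * θ + r.2 < ε}
  have hUo : ∀ r, IsOpen (U r) := fun r =>
    have hc : Continuous fun z : ℝ => z + r.1 * θ + r.2 := by fun_prop
    isOpen_Ioo.preimage hc
  have hcov : Set.Icc (0 : ℝ) 1 ⊆ ⋃ r, U r := by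
    intro z _
    obtain ⟨g, hg, hg1, hg2⟩ := hd.exists_between (show -z < ε - z by linarith)
    obtain ⟨i, q, rfl⟩ := AddSubgroup.mem_closure_pair.1 hg
    simp only [zsmul_eq_mul, mul_one] at hg1 hg2
    exact Set.mem_iUnion.2 ⟨(i, q), by dsimp only; linarith, by dsimp only; linarith⟩
  obtain ⟨F, hF⟩ := isCompact_Icc.elim_finite_subcover U hUo hcov
  obtain ⟨M, hM⟩ := (F.image fun r => r.1.natAbs).bddAbove
  refine ⟨2 * M, fun p => ?_⟩
  -- The covering shifts lie in `[-M, M]`, so start from the centre `p + M` of the window.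
  obtain ⟨r, hr, hr1, hr2⟩ := Set.mem_iUnion₂.1 (hF
    ⟨Int.fract_nonneg (((p : ℝ) + M - n) * θ), (Int.fract_lt_one _).le⟩)
  have hb : r.1.natAbs ≤ M := hM (by simpa using ⟨r.1, ⟨r.2, hr⟩, rfl⟩)
  refine ⟨p + M + r.1, by omega, by push_cast; omega, ⌊((p : ℝ) + M - n) * θ⌋ - r.2, ?_, ?_⟩
  all_goals
    unfold Int.fract at hr1 hr2
    push_cast
    linarith

lemma exists_cell {m : ℕ} (P : Fin (m + 2) → ℝ) (hP0 : P 0 = 0)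
    (hP1 : P (Fin.last (m + 1)) = 1) (y : ℝ) (h0 : 0 ≤ y) (h1 : y < 1) :
    ∃ k : Fin (m + 1), P k.castSucc ≤ y ∧ y < P k.succ := by
  by_contra! h
  have hall : ∀ i : Fin (m + 2), P i ≤ y :=
    Fin.induction (by rw [hP0]; exact h0) h
  linarith [hall (Fin.last (m + 1))]

theorem interval_coding_repetitive
    {S : Type*} (θ x : ℝ) (hθ : Irrational θ) (m : ℕ)
    (P : Fin (m + 2) → ℝ) (hP0 : P 0 = 0) (hP1 : P (Fin.last (m + 1)) = 1)
    (hPmono : StrictMono P)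
    (ξ : Fin (m + 1) → S) (w : ℤ → S)
    (hw : ∀ n : ℤ, ∀ k : Fin (m + 1),
      P k.castSucc ≤ Int.fract (x + (n : ℝ) * θ) →
      Int.fract (x + (n : ℝ) * θ) < P k.succ → w n = ξ k) :
    RepetitiveZ w := by
  have hcell := fun n : ℤ => exists_cell P hP0 hP1 (Int.fract (x + (n : ℝ) * θ))
    (Int.fract_nonneg _) (Int.fract_lt_one _)
  choose a ha1 ha2 using hcell
  have hwa : ∀ n, w n = ξ (a n) := fun n => hw n _ (ha1 n) (ha2 n)
  have huniq : ∀ (n : ℤ) (c : Fin (m + 1)), P c.castSucc ≤ Int.fract (x + (n : ℝ) * θ) →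
      Int.fract (x + (n : ℝ) * θ) < P c.succ → a n = c := by
    intro n c h1 h2
    have h3 := hPmono.lt_iff_lt.1 ((ha1 n).trans_lt h2)
    have h4 := hPmono.lt_iff_lt.1 (h1.trans_lt (ha2 n))
    simp only [Fin.lt_def, Fin.val_castSucc, Fin.val_succ] at h3 h4
    exact Fin.ext (by omega)
  have hrep : RepetitiveZ a := by
    refine repetitiveZ_of_finite a fun k n => ?_
    -- `ε` is at most the distance from each of the `k` points to the right end of its interval.
    obtain ⟨ε, hε, hεP⟩ : ∃ ε : ℝ, 0 < ε ∧ ∀ t < k,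
        Int.fract (x + ((n + (t : ℤ) : ℤ) : ℝ) * θ) + ε ≤ P (a (n + (t : ℤ))).succ := by
      clear hw hwa
      induction k with
      | zero => exact ⟨1, one_pos, by simp⟩
      | succ k ih =>
        obtain ⟨ε, hε, h⟩ := ih
        refine ⟨min ε (P (a (n + (k : ℤ))).succ - Int.fract (x + ((n + (k : ℤ) : ℤ) : ℝ) * θ)),
          lt_min hε (sub_pos.2 (ha2 _)), fun t ht => ?_⟩
        rcases Nat.lt_succ_iff_lt_or_eq.1 ht with ht | rfl
        · exact (add_le_add_right (min_le_left _ _) _).trans (h t ht)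
        · linarith [min_le_right ε
            (P (a (n + (t : ℤ))).succ - Int.fract (x + ((n + (t : ℤ) : ℤ) : ℝ) * θ))]
    obtain ⟨ℓ, hℓ⟩ := exists_return_bound θ hθ ε hε n
    refine ⟨ℓ, fun p => ?_⟩
    obtain ⟨j, hj1, hj2, q, hq1, hq2⟩ := hℓ p
    refine ⟨j, hj1, hj2, fun t ht => ?_⟩
    have hle1 : P (a (n + (t : ℤ))).succ ≤ 1 := hP1 ▸ hPmono.monotone (Fin.le_last _)
    have hfr : Int.fract (x + ((j + (t : ℤ) : ℤ) : ℝ) * θ) =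
        Int.fract (x + ((n + (t : ℤ) : ℤ) : ℝ) * θ) + (((j : ℝ) - n) * θ - q) := by
      refine Int.fract_eq_iff.2 ⟨?_, ?_, ⌊x + ((n + (t : ℤ) : ℤ) : ℝ) * θ⌋ + q, ?_⟩
      · linarith [Int.fract_nonneg (x + ((n + (t : ℤ) : ℤ) : ℝ) * θ)]
      · linarith [hεP t ht]
      · unfold Int.fract
        push_cast
        ring
    apply huniq
    · rw [hfr]
      linarith [ha1 (n + (t : ℤ))]
    · rw [hfr]
      linarith [hεP t ht]
  intro k
  obtain ⟨ℓ, hℓ⟩ := hrep k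
  refine ⟨ℓ, fun p n => ?_⟩
  obtain ⟨j, h1, h2, h3⟩ := hℓ p n
  exact ⟨j, h1, h2, fun t ht => by rw [hwa, hwa, h3 t ht]⟩
end

section
/- Let θ be an irrational real number, let β be a real number with 0 < β < 1, and let x ∈ ℝ. Then the coding sequence c(θ, β, x) is not forward eventually periodic: for every N ∈ ℤ and every integer p ≥ 1 there exists n ≥ N with c(θ, β, x)(n + p) ≠ c(θ, β, x)(n). -/
/-- Forward orbits of an irrational rotation of the circle `ℝ / ℤ` meet every nonempty open arc
`(a, b)`. -/
theorem exists_nat_fract_mem_Ioo {α : ℝ} (hα : Irrational α) (y : ℝ) {a b : ℝ}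
    (ha : 0 ≤ a) (hab : a < b) (hb : b ≤ 1) :
    ∃ k : ℕ, Int.fract (y + k * α) ∈ Set.Ioo a b := by
  have hz : DenseRange (· • (α : AddCircle (1 : ℝ)) : ℤ → AddCircle (1 : ℝ)) :=
    AddCircle.denseRange_zsmul_coe_iff.2 (by simpa using hα)
  -- Compactness of the circle turns two-sided density into forward density.
  have hn : DenseRange (· • (α : AddCircle (1 : ℝ)) : ℕ → AddCircle (1 : ℝ)) :=
    denseRange_zsmul_iff_nsmul.1 hz
  have hU : IsOpen ((fun t : ℝ => (t : AddCircle (1 : ℝ))) '' Set.Ioo (a - y) (b - y)) :=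
    QuotientAddGroup.isOpenMap_coe _ isOpen_Ioo
  obtain ⟨k, t, ⟨hat, htb⟩, hk⟩ := hn.exists_mem_open hU
    ((Set.nonempty_Ioo.2 (by linarith)).image _)
  have hk' : (t : AddCircle (1 : ℝ)) = ((k * α : ℝ) : AddCircle (1 : ℝ)) := by
    rw [← nsmul_eq_mul, AddCircle.coe_nsmul]
    exact hk
  obtain ⟨m, hm⟩ := QuotientAddGroup.eq_iff_sub_mem.1 hk'.symm
  have hm' : (m : ℝ) = k * α - t := by simpa using hm
  have hf : Int.fract (y + k * α) = y + t :=
    Int.fract_eq_iff.2 ⟨by linarith, by linarith, m, by linarith⟩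
  exact ⟨k, by linarith, by linarith⟩

theorem coding_not_forward_eventually_periodic
    (θ β x : ℝ) (hθ : Irrational θ) (hβ0 : 0 < β) (hβ1 : β < 1) :
    ∀ N : ℤ, ∀ p : ℤ, 1 ≤ p → ∃ n : ℤ, N ≤ n ∧ coding θ β x (n + p) ≠ coding θ β x n := by
  intro N p hp
  by_contra! h
  have hconst : ∀ k : ℕ, coding θ β x (N + k * p) = coding θ β x N := by
    intro k
    induction k with
    | zero => simp
    | succ k ih =>
      rw [← ih, ← h (N + k * p) (by nlinarith)]
      congr 1
      push_cast
      ring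
  have hα : Irrational (p * θ) := hθ.intCast_mul (by omega)
  obtain ⟨k, -, hk⟩ := exists_nat_fract_mem_Ioo hα (x + N * θ) le_rfl hβ0 hβ1.le
  obtain ⟨l, hl, -⟩ := exists_nat_fract_mem_Ioo hα (x + N * θ) hβ0.le hβ1 le_rfl
  have hkl := (hconst k).trans (hconst l).symm
  have e : ∀ j : ℕ, x + ((N + j * p : ℤ) : ℝ) * θ = x + N * θ + j * (p * θ) := by
    intro j
    push_cast
    ring
  simp only [coding, e, decide_eq_decide] at hkl
  exact (hkl.1 hk).not_gt hl
end

section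
/- Let θ be an irrational real number, let β be a real number with 0 < β < 1, and let x, y ∈ ℝ. If c(θ, β, x)(n) = c(θ, β, y)(n) for every n ∈ ℤ, then x − y ∈ ℤ. -/
/-- An orbit of an irrational rotation meets every nonempty open interval modulo `1`. -/
lemma exists_orbit_mem_Ioo {θ : ℝ} (hθ : Irrational θ) (x : ℝ) {a b : ℝ} (hab : a < b) :
    ∃ n m : ℤ, x + (n : ℝ) * θ - (m : ℝ) ∈ Set.Ioo a b := by
  have hd : Dense (AddSubgroup.closure {θ, 1} : Set ℝ) :=
    dense_addSubgroupClosure_pair_iff.2 (by simpa using hθ)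
  obtain ⟨z, hz, hza, hzb⟩ := hd.exists_between (show a - x < b - x by linarith)
  obtain ⟨n, m, rfl⟩ := AddSubgroup.mem_closure_pair.1 hz
  simp only [zsmul_eq_mul, mul_one] at hza hzb
  refine ⟨n, -m, ?_, ?_⟩ <;> push_cast <;> linarith

theorem coding_injective (θ β x y : ℝ) (hθ : Irrational θ) (hβ0 : 0 < β) (hβ1 : β < 1)
    (h : ∀ n : ℤ, coding θ β x n = coding θ β y n) :
    ∃ m : ℤ, x - y = (m : ℝ) := by
  by_contra hne
  have hd0 : 0 < Int.fract (y - x) := by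
    refine (Int.fract_nonneg _).lt_of_ne fun h0 => hne ⟨-⌊y - x⌋, ?_⟩
    have := Int.floor_add_fract (y - x)
    push_cast
    linarith
  have hd1 := Int.fract_lt_one (y - x)
  have hyx := Int.floor_add_fract (y - x)
  have hI : max β (1 - Int.fract (y - x)) < min 1 (1 - Int.fract (y - x) + β) := by
    refine max_lt (lt_min ?_ ?_) (lt_min ?_ ?_) <;> linarith
  obtain ⟨n, m, hlo, hhi⟩ := exists_orbit_mem_Ioo hθ x hI
  obtain ⟨h1, h2⟩ := max_lt_iff.1 hlo
  obtain ⟨h3, h4⟩ := lt_min_iff.1 hhi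
  have hx : Int.fract (x + (n : ℝ) * θ) = x + (n : ℝ) * θ - m :=
    Int.fract_eq_iff.2 ⟨by linarith, by linarith, m, by ring⟩
  have hy : Int.fract (y + (n : ℝ) * θ) = x + (n : ℝ) * θ - m + Int.fract (y - x) - 1 :=
    Int.fract_eq_iff.2 ⟨by linarith, by linarith, m + ⌊y - x⌋ + 1, by push_cast; linarith⟩
  have hn := h n
  rw [coding, coding, decide_eq_decide, hx, hy] at hn
  linarith [hn.2 (by linarith)]
end

section
/- Let θ be an irrational real number, let β be a real number with 0 < β < 1, let x, y ∈ ℝ, let k ∈ ℕ and n, m ∈ ℤ. Then there exists j ∈ ℤ with j ≥ m such that c(θ, β, x)(j + t) = c(θ, β, y)(n + t) for every natural number t < k. In other words, every finite word occurring in one coding sequence occurs at arbitrarily large positions in every other coding sequence with the same θ and β. -/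
open Filter Topology

/-- Right-continuity of the coding partition: since `[0, β)` and `[β, 1)` are closed on the left,
moving a point slightly to the right does not change its cell. -/
theorem eventually_fract_add_lt_iff (u β : ℝ) (hβ1 : β < 1) :
    ∀ᶠ δ in 𝓝[>] (0 : ℝ), (Int.fract (u + δ) < β ↔ Int.fract u < β) := by
  have key : ∀ δ : ℝ, 0 < δ → Int.fract u + δ < 1 → Int.fract (u + δ) = Int.fract u + δ := by
    intro δ h0 h1
    rw [Int.fract_eq_iff]
    refine ⟨by linarith [Int.fract_nonneg u], h1, ⌊u⌋, ?_⟩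
    rw [Int.fract]
    ring
  by_cases h : Int.fract u < β
  · filter_upwards [Ioo_mem_nhdsGT (sub_pos.2 h)] with δ hδ
    rw [key δ hδ.1 (by linarith [hδ.2])]
    exact iff_of_true (by linarith [hδ.2]) h
  · filter_upwards [Ioo_mem_nhdsGT (sub_pos.2 (Int.fract_lt_one u))] with δ hδ
    rw [key δ hδ.1 (by linarith [hδ.2])]
    exact iff_of_false (by linarith [hδ.1]) h

/-- Forward orbits of an irrational rotation of `ℝ / ℤ` are dense: the full orbit is dense, and in a
compact group the negative multiples of an element are limits of positive ones. -/
theorem exists_nat_mul_sub_int_mem_Ioo {θ : ℝ} (hθ : Irrational θ) {a b : ℝ} (hab : a < b) :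
    ∃ (N : ℕ) (p : ℤ), N * θ - p ∈ Set.Ioo a b := by
  have hd : DenseRange (· • (θ : AddCircle (1 : ℝ)) : ℕ → AddCircle (1 : ℝ)) :=
    denseRange_zsmul_iff_nsmul.1 (AddCircle.denseRange_zsmul_coe_iff.2 (by simpa using hθ))
  obtain ⟨N, w, hw, hwN⟩ := hd.exists_mem_open
    (QuotientAddGroup.isOpenMap_coe (N := AddSubgroup.zmultiples (1 : ℝ)) _ isOpen_Ioo)
    ((Set.nonempty_Ioo.2 hab).image _)
  have h0 : ((N * θ - w : ℝ) : AddCircle (1 : ℝ)) = 0 := by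
    rw [AddCircle.coe_sub, ← nsmul_eq_mul, AddCircle.coe_nsmul, sub_eq_zero]
    exact hwN.symm
  obtain ⟨p, hp⟩ := AddCircle.coe_eq_zero_iff (1 : ℝ) |>.1 h0
  refine ⟨N, p, ?_⟩
  have hpw : N * θ - p = w := by
    rw [zsmul_eq_mul, mul_one] at hp
    linarith
  rwa [hpw]

theorem coding_common_language (θ β x y : ℝ) (hθ : Irrational θ) (hβ0 : 0 < β) (hβ1 : β < 1)
    (k : ℕ) (n m : ℤ) :
    ∃ j : ℤ, m ≤ j ∧ ∀ t : ℕ, t < k →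
      coding θ β x (j + (t : ℤ)) = coding θ β y (n + (t : ℤ)) := by
  have hev : ∀ᶠ δ in 𝓝[>] (0 : ℝ), ∀ t ∈ Finset.range k,
      (Int.fract (y + ((n + (t : ℤ) : ℤ) : ℝ) * θ + δ) < β ↔
        Int.fract (y + ((n + (t : ℤ) : ℤ) : ℝ) * θ) < β) :=
    (eventually_all_finset _).2 fun t _ => eventually_fract_add_lt_iff _ β hβ1
  obtain ⟨ε, hε, hsub⟩ := mem_nhdsGT_iff_exists_Ioo_subset.1 hev
  have hε0 : (0 : ℝ) < ε := hε
  obtain ⟨N, p, hNp⟩ := exists_nat_mul_sub_int_mem_Ioo hθ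
    (show y + n * θ - x - m * θ < y + n * θ - x - m * θ + ε by linarith)
  refine ⟨m + N, by omega, fun t ht => ?_⟩
  have h := hsub (show N * θ - p - (y + n * θ - x - m * θ) ∈ Set.Ioo 0 ε from
    ⟨by linarith [hNp.1], by linarith [hNp.2]⟩) t (Finset.mem_range.2 ht)
  -- The two orbit points at time `t` differ by the chosen shift, up to the integer `p`.
  have he : y + ((n + (t : ℤ) : ℤ) : ℝ) * θ + (N * θ - p - (y + n * θ - x - m * θ)) =
      x + ((m + (N : ℤ) + (t : ℤ) : ℤ) : ℝ) * θ - p := by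
    push_cast
    ring
  rw [he, Int.fract_sub_intCast] at h
  exact decide_eq_decide.2 h
end

section
/- Every finite subgroup of odd order of the group of homeomorphisms of the closed interval Set.Icc (0:ℝ) 1 is trivial: if G is a subgroup of Homeomorph (Set.Icc (0:ℝ) 1) (Set.Icc (0:ℝ) 1), G is finite, and the cardinality of G is odd, then G is the trivial subgroup. -/
/-!
A homeomorphism `g` of `[0, 1]` is strictly monotone or strictly antitone, so `g ^ 2` is strictly
increasing. An increasing map of finite order on a linear order is the identity, because the orbit
of a point it moves is strictly monotone and never returns. Hence every `g` of finite order
satisfies `g ^ 2 = 1`, and if its order is odd as well, then `g = 1`.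
-/

/-- The group of self-homeomorphisms of a topological space, under composition. -/
instance homeomorphGroup {X : Type*} [TopologicalSpace X] : Group (X ≃ₜ X) where
  mul f g := g.trans f
  one := Homeomorph.refl X
  inv := Homeomorph.symm
  mul_assoc _ _ _ := Homeomorph.ext fun _ => rfl
  one_mul _ := Homeomorph.ext fun _ => rfl
  mul_one _ := Homeomorph.ext fun _ => rfl
  inv_mul_cancel f := Homeomorph.ext fun x => f.symm_apply_apply x

theorem homeomorph_pow_apply {X : Type*} [TopologicalSpace X] (g : X ≃ₜ X) (n : ℕ) (x : X) :
    (g ^ n) x = g^[n] x := by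
  induction n generalizing x with
  | zero => rfl
  | succ n ih =>
    rw [pow_succ, Function.iterate_succ_apply, ← ih]
    rfl

theorem StrictMono.apply_eq_of_iterate_eq {X : Type*} [LinearOrder X] {f : X → X}
    (hf : StrictMono f) {n : ℕ} (hn : 0 < n) {x : X} (hx : f^[n] x = x) : f x = x := by
  rcases lt_trichotomy (f x) x with h | h | h
  · exact absurd hx (hf.strictAnti_iterate_of_map_lt h hn).ne
  · exact h
  · exact absurd hx (hf.strictMono_iterate_of_lt_map h hn).ne'

theorem unitInterval_homeomorph_sq_eq_one
    (g : Homeomorph (Set.Icc (0 : ℝ) 1) (Set.Icc (0 : ℝ) 1)) {n : ℕ} (hn : 0 < n)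
    (hg : g ^ n = 1) : g ^ 2 = 1 := by
  have hmono : StrictMono (g ^ 2 : Homeomorph (Set.Icc (0 : ℝ) 1) (Set.Icc (0 : ℝ) 1)) := by
    have h : ⇑(g ^ 2) = g ∘ g := funext fun x => homeomorph_pow_apply g 2 x
    rw [h]
    rcases g.continuous.strictMono_of_inj_boundedOrder' g.injective with hm | ha
    · exact hm.comp hm
    · exact ha.comp ha
  refine Homeomorph.ext fun x => hmono.apply_eq_of_iterate_eq hn ?_
  rw [← homeomorph_pow_apply, pow_right_comm, hg, one_pow]
  rfl

theorem odd_order_subgroup_of_interval_homeos_trivial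
    (G : Subgroup (Homeomorph (Set.Icc (0 : ℝ) 1) (Set.Icc (0 : ℝ) 1)))
    (hfin : Finite G) (hodd : Odd (Nat.card G)) :
    G = ⊥ := by
  refine (Subgroup.eq_bot_iff_forall G).2 fun g hg => ?_
  have hcard : g ^ Nat.card G = 1 :=
    congrArg Subtype.val (pow_card_eq_one' (x := (⟨g, hg⟩ : G)))
  have hsq : g ^ 2 = 1 := unitInterval_homeomorph_sq_eq_one g hodd.pos hcard
  obtain ⟨k, hk⟩ := hodd
  rwa [hk, pow_succ, pow_mul, hsq, one_pow, one_mul] at hcard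
end

section
/- Let S be a type, let w : ℤ → S be repetitive, let F ⊆ ℤ be a finite set, and let w' : ℤ → S satisfy w'(n) = w(n) for every n ∉ F. Then w' is forward repetitive and backward repetitive: there exists N ∈ ℕ such that the sequences n ↦ w'(N + n) and n ↦ w'(−N − n) (as sequences ℕ → S) are repetitive. -/
/-- A one-sided sequence `u : ℕ → S` is repetitive if every word of length `k`
occurring in `u` occurs in every window of length `ℓ + k`. -/
def RepetitiveN {S : Type*} (u : ℕ → S) : Prop :=
  ∀ k : ℕ, ∃ ℓ : ℕ, ∀ m n : ℕ, ∃ j : ℕ, m ≤ j ∧ j ≤ m + ℓ ∧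
    ∀ t : ℕ, t < k → u (j + t) = u (n + t)

/-- Restricting a repetitive bi-infinite sequence to a forward half-line keeps it repetitive:
a window of the half-line is a window of `ℤ`, so the same gap `ℓ` works. -/
theorem RepetitiveZ.tail {S : Type*} {w : ℤ → S} (hw : RepetitiveZ w) (a : ℤ) :
    RepetitiveN (fun n : ℕ => w (a + n)) := by
  intro k
  obtain ⟨ℓ, hℓ⟩ := hw k
  refine ⟨ℓ, fun m n => ?_⟩
  obtain ⟨j, hj₁, hj₂, hj⟩ := hℓ (a + m) (a + n)
  obtain ⟨i, rfl⟩ : ∃ i : ℕ, j = a + i := ⟨(j - a).toNat, by omega⟩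
  refine ⟨i, by omega, by omega, fun t ht => ?_⟩
  simpa [add_assoc] using hj t ht

theorem RepetitiveZ.comp_neg {S : Type*} {w : ℤ → S} (hw : RepetitiveZ w) :
    RepetitiveZ (fun n => w (-n)) := by
  intro k
  obtain ⟨ℓ, hℓ⟩ := hw k
  refine ⟨ℓ, fun m n => ?_⟩
  -- The reversed word at `n` is the word of `w` that starts at `-n - k + 1`.
  obtain ⟨j, hj₁, hj₂, hj⟩ := hℓ (-m - ℓ - k + 1) (-n - k + 1)
  refine ⟨-j - k + 1, by omega, by omega, fun t ht => ?_⟩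
  have h := hj (k - 1 - t) (by omega)
  have e₁ : -(-j - k + 1 + (t : ℤ)) = j + ((k - 1 - t : ℕ) : ℤ) := by omega
  have e₂ : -(n + (t : ℤ)) = -n - k + 1 + ((k - 1 - t : ℕ) : ℤ) := by omega
  simp only [e₁, e₂, h]

theorem finitely_modified_repetitive_is_end_repetitive
    {S : Type*} (w : ℤ → S) (hw : RepetitiveZ w)
    (F : Set ℤ) (hF : F.Finite) (w' : ℤ → S) (hw' : ∀ n : ℤ, n ∉ F → w' n = w n) :
    ∃ N : ℕ, RepetitiveN (fun n : ℕ => w' ((N : ℤ) + (n : ℤ))) ∧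
      RepetitiveN (fun n : ℕ => w' (-(N : ℤ) - (n : ℤ))) := by
  obtain ⟨b, hb⟩ := hF.bddAbove
  obtain ⟨a, ha⟩ := hF.bddBelow
  -- Beyond distance `N` from the origin, `w'` and `w` agree.
  let N : ℕ := b.natAbs + a.natAbs + 1
  refine ⟨N, ?_, ?_⟩
  · have h : (fun n : ℕ => w' ((N : ℤ) + n)) = fun n : ℕ => w (N + n) := by
      funext n
      refine hw' _ fun hn => ?_
      have := hb hn
      omega
    rw [h]
    exact hw.tail N
  · have h : (fun n : ℕ => w' (-(N : ℤ) - n)) = fun n : ℕ => w (-(N + n)) := by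
      funext n
      rw [neg_add']
      refine hw' _ fun hn => ?_
      have := ha hn
      omega
    rw [h]
    exact hw.comp_neg.tail N
end
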